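/- Uniqueness of the satisfying child: let s be a nonempty string and let w_a ≠ w_b be two distinct non-atomic canonical tokens, both suffixes of s, with suc(w_a) = suc(w_b). Then w_a and w_b cannot both satisfy the Prefix Last-Token Condition with respect to s. -/

import Mathlib

/-!
Common BPE formalization preamble.

A token is a (nonempty) string over the alphabet `α`, modeled as `List α`.
A merge rule is a pair of tokens; a dictionary is an ordered list of rules
(earlier rules have strictly higher priority).
-/

namespace BPE

variable {α : Type*} [DecidableEq α]

/-- A token is a string over the alphabet (nonemptiness is imposed by hypotheses). -/
abbrev Token (α : Type*) := List α

/-- A merge rule is an ordered pair of tokens. -/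
abbrev Rule (α : Type*) := Token α × Token α

/-- A dictionary is an ordered list of merge rules; earlier = higher priority. -/
abbrev Dict (α : Type*) := List (Rule α)

/-- Apply a single merge rule to a token list, scanning left to right and replacing
each adjacent occurrence of `r.1` followed by `r.2` by the concatenated token,
resuming the scan after the newly formed token (no overlaps). -/
def applyRule (r : Rule α) : List (Token α) → List (Token α)
  | [] => []
  | [t] => [t]
  | t :: u :: rest =>
      if t = r.1 ∧ u = r.2 then (r.1 ++ r.2) :: applyRule r rest
      else t :: applyRule r (u :: rest)

/-- `φ₀(s)`: the list of single-character tokens of `s`. -/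
def phi0 (s : List α) : List (Token α) := s.map (fun c => [c])

/-- `φ_k(s)`: the token list after applying the first `k` rules of `D` to `s`. -/
def phiK (D : Dict α) (k : ℕ) (s : List α) : List (Token α) :=
  (D.take k).foldl (fun φ r => applyRule r φ) (phi0 s)

/-- The BPE tokenization `𝕋_D(s)`. -/
def tokenize (D : Dict α) (s : List α) : List (Token α) :=
  phiK D D.length s

/-- Detokenization `π`: concatenation of the tokens. -/
def detok (φ : List (Token α)) : List α := φ.flatten

/-- A dictionary is valid if all rule components are genuine (nonempty) tokens. -/
def ValidDict (D : Dict α) : Prop := ∀ r ∈ D, r.1 ≠ [] ∧ r.2 ≠ []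

/-- A token `t` is canonical if `𝕋_D(t) = [t]`. -/
def IsCanonical (D : Dict α) (t : Token α) : Prop := tokenize D t = [t]

/-- The last token `θ(s)`: last element of `𝕋_D(s)` (defaulting to `[]`). -/
def theta (D : Dict α) (s : List α) : Token α := (tokenize D s).getLastD []

/-- `j` (0-based) is the index of the canonical rule of `t`:
`φ_j(t)` has exactly two tokens and `φ_{j+1}(t) = [t]`. -/
def IsCanonicalRuleIdx (D : Dict α) (t : Token α) (j : ℕ) : Prop :=
  j < D.length ∧ (phiK D j t).length = 2 ∧ phiK D (j + 1) t = [t]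

open Classical in
/-- The (0-based) index of the canonical rule of `t` (junk value `0` if none exists). -/
noncomputable def canonIdx (D : Dict α) (t : Token α) : ℕ :=
  if h : ∃ j, IsCanonicalRuleIdx D t j then h.choose else 0

/-- Predecessor `pre(t)`: first token of the two-token stage `φ_{j-1}(t)`. -/
noncomputable def pre (D : Dict α) (t : Token α) : Token α :=
  (phiK D (canonIdx D t) t).headD []

/-- Successor `suc(t)`: second token of the two-token stage `φ_{j-1}(t)`. -/
noncomputable def suc (D : Dict α) (t : Token α) : Token α :=
  (phiK D (canonIdx D t) t).getLastD []

/-- `InPath D x a` means `a ∈ P(x)`: `a` is obtained from `x` by iterating `suc`,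
i.e. `a` lies on the ancestor path of `x` in the Successor Forest. -/
def InPath (D : Dict α) (x a : Token α) : Prop :=
  ∃ n : ℕ, (suc D)^[n] x = a

/-- `s` with the suffix `u` removed. -/
def dropSuffix (s u : List α) : List α := s.take (s.length - u.length)

/-- The Prefix Last-Token Condition of the canonical suffix token `t`
with respect to the string `s`. Atomic tokens satisfy it by definition;
a non-atomic token must satisfy Reachability and Priority dominance. -/
def PLTC (D : Dict α) (s t : Token α) : Prop :=
  t.length = 1 ∨
    (1 < t.length ∧
      InPath D (theta D (dropSuffix s (suc D t))) (pre D t) ∧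
      (theta D (dropSuffix s (suc D t)) ≠ pre D t →
        ∀ u : Token α, 1 < u.length → IsCanonical D u → suc D u = pre D t →
          InPath D (theta D (dropSuffix s (suc D t))) u →
          canonIdx D t < canonIdx D u))

/-!
Let `y` be the common successor of `wa` and `wb`, and let `x` be the last token preceding it. Both
predecessors lie on the ancestor path of `x`, and they differ because `wa ≠ wb`; say `pre wb` is
the further one, and let `u` be its child on the path, so that `pre wa` descends to `u` and `u` to
`pre wb`. Dominance says that the rule `(pre wb, y)` of `wb` fires before the rule of `u`. Right
after it fires, `pre wb` is still a separate token at the end of `pre wa`, so the tokenization of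
`wa` ends in `pre wb, y`. But the scan of a rule neither leaves nor creates an adjacent occurrence
of its own pair.
-/

theorem flatten_applyRule (r : Rule α) (φ : List (Token α)) :
    (applyRule r φ).flatten = φ.flatten := by
  fun_induction applyRule r φ <;> simp_all

theorem applyRule_eq_nil {r : Rule α} {φ : List (Token α)} (h : applyRule r φ = []) : φ = [] := by
  match φ with
  | [] => rfl
  | [_] => simp [applyRule] at h
  | _ :: _ :: _ =>
    rw [applyRule] at h
    split_ifs at h

theorem applyRule_eq_singleton {r : Rule α} {φ : List (Token α)} {t : Token α}
    (h : applyRule r φ = [t]) : φ = [t] ∨ φ = [r.1, r.2] ∧ t = r.1 ++ r.2 := by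
  fun_cases applyRule r φ with
  | case1 => simp [applyRule] at h
  | case2 v => exact .inl h
  | case3 v w rest hvw =>
    rw [applyRule, if_pos hvw, List.cons.injEq] at h
    simp [applyRule_eq_nil h.2, hvw, h.1]
  | case4 v w rest hvw =>
    rw [applyRule, if_neg hvw, List.cons.injEq] at h
    simpa using applyRule_eq_nil h.2

theorem applyRule_eq_append {r : Rule α} {φ ψ₁ ψ₂ : List (Token α)}
    (h : applyRule r φ = ψ₁ ++ ψ₂) :
    ∃ φ₁ φ₂, φ = φ₁ ++ φ₂ ∧ applyRule r φ₁ = ψ₁ ∧ applyRule r φ₂ = ψ₂ := by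
  induction φ using applyRule.induct r generalizing ψ₁ with
  | case1 => exact ⟨[], [], rfl, by simp_all [applyRule]⟩
  | case2 t =>
    rcases List.singleton_eq_append_iff.1 h with ⟨rfl, rfl⟩ | ⟨rfl, rfl⟩
    exacts [⟨[], [t], rfl, rfl, rfl⟩, ⟨[t], [], rfl, rfl, rfl⟩]
  | case3 t u rest htu ih =>
    rw [applyRule, if_pos htu] at h
    rcases List.cons_eq_append_iff.1 h with ⟨rfl, rfl⟩ | ⟨ψ, rfl, hψ⟩
    · exact ⟨[], t :: u :: rest, rfl, rfl, by rw [applyRule, if_pos htu]⟩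
    · obtain ⟨φ₁, φ₂, rfl, rfl, hφ₂⟩ := ih hψ
      exact ⟨t :: u :: φ₁, φ₂, rfl, by rw [applyRule, if_pos htu], hφ₂⟩
  | case4 t u rest htu ih =>
    rw [applyRule, if_neg htu] at h
    rcases List.cons_eq_append_iff.1 h with ⟨rfl, rfl⟩ | ⟨ψ, rfl, hψ⟩
    · exact ⟨[], t :: u :: rest, rfl, rfl, by rw [applyRule, if_neg htu]⟩
    · obtain ⟨φ₁, φ₂, hφ, rfl, hφ₂⟩ := ih hψ
      refine ⟨t :: φ₁, φ₂, by rw [hφ, List.cons_append], ?_, hφ₂⟩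
      rcases List.cons_eq_append_iff.1 hφ with ⟨rfl, -⟩ | ⟨φ, rfl, -⟩
      · rfl
      · rw [applyRule, if_neg htu]

theorem not_isInfix_applyRule {r : Rule α} (h₁ : r.1 ≠ []) (h₂ : r.2 ≠ [])
    (φ : List (Token α)) : ¬ [r.1, r.2] <:+: applyRule r φ := by
  rintro ⟨ψ₁, ψ₂, h⟩
  obtain ⟨φ', -, -, hφ', -⟩ := applyRule_eq_append h.symm
  obtain ⟨-, χ, -, -, hχ⟩ := applyRule_eq_append hφ'
  obtain ⟨χ₁, χ₂, rfl, hχ₁, hχ₂⟩ := applyRule_eq_append (ψ₁ := [r.1]) hχ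
  have hχ₁' : χ₁ = [r.1] := (applyRule_eq_singleton hχ₁).resolve_right (by simp [h₂])
  have hχ₂' : χ₂ = [r.2] := (applyRule_eq_singleton hχ₂).resolve_right (by simp [h₁])
  simp [hχ₁', hχ₂', applyRule] at hχ

/-- The token list obtained from `φ` by applying the rules of `R` in order. It splits the stages
`phiK` of a tokenization at an intermediate stage, see `phiK_eq_applyRules_phiK`. -/
def applyRules (R : List (Rule α)) (φ : List (Token α)) : List (Token α) :=
  R.foldl (fun φ r => applyRule r φ) φ

theorem flatten_applyRules (R : List (Rule α)) (φ : List (Token α)) :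
    (applyRules R φ).flatten = φ.flatten := by
  induction R generalizing φ with
  | nil => rfl
  | cons r R ih => exact (ih _).trans (flatten_applyRule r φ)

theorem applyRules_nil (R : List (Rule α)) : applyRules R [] = [] := by
  induction R with
  | nil => rfl
  | cons _ _ ih => exact ih

theorem applyRules_singleton (R : List (Rule α)) (t : Token α) : applyRules R [t] = [t] := by
  induction R with
  | nil => rfl
  | cons _ _ ih => exact ih

theorem applyRules_eq_append {R : List (Rule α)} {φ ψ₁ ψ₂ : List (Token α)}
    (h : applyRules R φ = ψ₁ ++ ψ₂) :
    ∃ φ₁ φ₂, φ = φ₁ ++ φ₂ ∧ applyRules R φ₁ = ψ₁ ∧ applyRules R φ₂ = ψ₂ := by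
  induction R generalizing φ with
  | nil => exact ⟨ψ₁, ψ₂, h, rfl, rfl⟩
  | cons r R ih =>
    obtain ⟨χ₁, χ₂, hχ, rfl, rfl⟩ := ih h
    obtain ⟨φ₁, φ₂, rfl, rfl, rfl⟩ := applyRule_eq_append hχ
    exact ⟨φ₁, φ₂, rfl, rfl, rfl⟩

section Stages

variable {D : Dict α} {i j k : ℕ} {s t u v : List α}

theorem phiK_eq_applyRules_phiK (hij : i ≤ j) :
    phiK D j s = applyRules ((D.take j).drop i) (phiK D i s) := by
  rw [phiK, applyRules, phiK, ← List.foldl_append, ← min_eq_left hij, ← List.take_take,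
    min_eq_left hij, List.take_append_drop]

theorem phiK_succ_of_getElem? {r : Rule α} (h : D[k]? = some r) :
    phiK D (k + 1) s = applyRule r (phiK D k s) := by
  simp [phiK, List.take_add_one, h]

theorem phiK_succ_of_length_le (h : D.length ≤ k) : phiK D (k + 1) s = phiK D k s := by
  simp [phiK, List.take_add_one, h]

theorem flatten_phiK (D : Dict α) (k : ℕ) (s : List α) : (phiK D k s).flatten = s :=
  (flatten_applyRules _ _).trans <| by simp [phi0, ← List.flatMap_def]

theorem eq_of_phiK_eq_singleton (h : phiK D k s = [t]) : s = t := by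
  simpa [flatten_phiK] using congrArg List.flatten h

theorem phiK_eq_singleton_of_le (hij : i ≤ j) (h : phiK D i t = [t]) : phiK D j t = [t] := by
  rw [phiK_eq_applyRules_phiK hij, h, applyRules_singleton]

theorem phiK_eq_singleton_of_length_eq_one (ht : t.length = 1) : phiK D k t = [t] := by
  obtain ⟨c, rfl⟩ := List.length_eq_one_iff.1 ht
  exact applyRules_singleton _ _

theorem phiK_eq_append {ψ₁ ψ₂ : List (Token α)} (h : phiK D k s = ψ₁ ++ ψ₂) :
    ∃ u v, s = u ++ v ∧ phiK D k u = ψ₁ ∧ phiK D k v = ψ₂ := by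
  obtain ⟨φ₁, φ₂, hφ, rfl, rfl⟩ := applyRules_eq_append h
  obtain ⟨u, v, rfl, rfl, rfl⟩ := List.map_eq_append_iff.1 hφ
  exact ⟨u, v, rfl, rfl, rfl⟩

theorem phiK_append_of_le (hij : i ≤ j) (h : phiK D j (u ++ v) = phiK D j u ++ phiK D j v) :
    phiK D i (u ++ v) = phiK D i u ++ phiK D i v := by
  rw [phiK_eq_applyRules_phiK hij] at h
  obtain ⟨φ₁, φ₂, hφ, hφ₁, -⟩ := applyRules_eq_append h
  obtain ⟨u', v', huv, rfl, rfl⟩ := phiK_eq_append hφ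
  obtain rfl : u' = u := by
    simpa [flatten_applyRules, flatten_phiK] using congrArg List.flatten hφ₁
  rw [hφ, List.append_cancel_left huv]

theorem suc_eq_self (ht : t.length = 1) : suc D t = t := by
  simp [suc, phiK_eq_singleton_of_length_eq_one ht]

theorem suc_isSuffix (D : Dict α) (t : Token α) : suc D t <:+ t := by
  have h := flatten_phiK D (canonIdx D t) t
  rw [suc]
  rcases (phiK D (canonIdx D t) t).eq_nil_or_concat with hφ | ⟨φ, p, hφ⟩ <;>
    rw [hφ] at h ⊢ <;> simp [← h]

theorem exists_isCanonicalRuleIdx (hl : 1 < t.length) (h : phiK D k t = [t]) :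
    ∃ j, IsCanonicalRuleIdx D t j := by
  induction k with
  | zero =>
    have hlen := congrArg List.length h
    simp only [phiK, phi0, List.take_zero, List.foldl_nil, List.length_map, List.length_cons,
      List.length_nil] at hlen
    omega
  | succ k ih =>
    rcases lt_or_ge k D.length with hk | hk
    · have hstep := h
      rw [phiK_succ_of_getElem? (List.getElem?_eq_getElem hk)] at hstep
      rcases applyRule_eq_singleton hstep with hsingle | ⟨hpair, -⟩
      · exact ih hsingle
      · exact ⟨k, hk, by simp [hpair], h⟩
    · exact ih (by rwa [← phiK_succ_of_length_le hk])

end Stages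

namespace IsCanonical

variable {D : Dict α} {t : Token α} {i k : ℕ}

theorem ne_nil (ht : IsCanonical D t) : t ≠ [] := by
  rintro rfl
  exact List.cons_ne_nil _ _ (ht.symm.trans (applyRules_nil _))

theorem length_pos (ht : IsCanonical D t) : 0 < t.length :=
  List.length_pos_iff.2 ht.ne_nil

theorem isCanonicalRuleIdx_canonIdx (ht : IsCanonical D t) (hl : 1 < t.length) :
    IsCanonicalRuleIdx D t (canonIdx D t) := by
  have h := exists_isCanonicalRuleIdx hl ht
  rw [canonIdx, dif_pos h]
  exact h.choose_spec

theorem phiK_canonIdx (ht : IsCanonical D t) (hl : 1 < t.length) :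
    phiK D (canonIdx D t) t = [pre D t, suc D t] := by
  obtain ⟨p, q, h⟩ := List.length_eq_two.1 (ht.isCanonicalRuleIdx_canonIdx hl).2.1
  simp [pre, suc, h]

theorem pre_append_suc (ht : IsCanonical D t) (hl : 1 < t.length) : pre D t ++ suc D t = t := by
  simpa [ht.phiK_canonIdx hl] using flatten_phiK D (canonIdx D t) t

theorem getElem?_canonIdx (ht : IsCanonical D t) (hl : 1 < t.length) :
    D[canonIdx D t]? = some (pre D t, suc D t) := by
  obtain ⟨hlt, -, hmerge⟩ := ht.isCanonicalRuleIdx_canonIdx hl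
  have hD := List.getElem?_eq_getElem hlt
  rw [phiK_succ_of_getElem? hD, ht.phiK_canonIdx hl] at hmerge
  rcases applyRule_eq_singleton hmerge with h | ⟨h, -⟩
  · simp at h
  · simp only [List.cons.injEq, and_true] at h
    rw [hD, h.1, h.2]

theorem phiK_canonIdx_pre_suc (ht : IsCanonical D t) (hl : 1 < t.length) :
    phiK D (canonIdx D t) (pre D t) = [pre D t] ∧ phiK D (canonIdx D t) (suc D t) = [suc D t] := by
  obtain ⟨u, v, -, hu, hv⟩ := phiK_eq_append (ψ₁ := [pre D t]) (ht.phiK_canonIdx hl)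
  obtain rfl := eq_of_phiK_eq_singleton hu
  obtain rfl := eq_of_phiK_eq_singleton hv
  exact ⟨hu, hv⟩

theorem isCanonical_pre (ht : IsCanonical D t) (hl : 1 < t.length) : IsCanonical D (pre D t) :=
  phiK_eq_singleton_of_le (ht.isCanonicalRuleIdx_canonIdx hl).1.le (ht.phiK_canonIdx_pre_suc hl).1

theorem isCanonical_suc (ht : IsCanonical D t) : IsCanonical D (suc D t) := by
  rcases Nat.lt_or_ge 1 t.length with hl | hl
  · exact phiK_eq_singleton_of_le (ht.isCanonicalRuleIdx_canonIdx hl).1.le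
      (ht.phiK_canonIdx_pre_suc hl).2
  · rwa [suc_eq_self (le_antisymm hl ht.length_pos)]

theorem canonIdx_lt_of_phiK_eq_singleton (ht : IsCanonical D t) (hl : 1 < t.length)
    (h : phiK D k t = [t]) : canonIdx D t < k := by
  by_contra! hk
  simpa [ht.phiK_canonIdx hl] using phiK_eq_singleton_of_le hk h

theorem phiK_eq_pre_append_suc (ht : IsCanonical D t) (hl : 1 < t.length) (hi : i ≤ canonIdx D t) :
    phiK D i t = phiK D i (pre D t) ++ phiK D i (suc D t) := by
  obtain ⟨hpre, hsuc⟩ := ht.phiK_canonIdx_pre_suc hl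
  have h : phiK D (canonIdx D t) (pre D t ++ suc D t) =
      phiK D (canonIdx D t) (pre D t) ++ phiK D (canonIdx D t) (suc D t) := by
    rw [hpre, hsuc, ht.pre_append_suc hl, ht.phiK_canonIdx hl, List.singleton_append]
  simpa only [ht.pre_append_suc hl] using phiK_append_of_le hi h

theorem phiK_suc_isSuffix (ht : IsCanonical D t) (hl : 1 < t.length) (hi : i ≤ canonIdx D t) :
    phiK D i (suc D t) <:+ phiK D i t := by
  rw [ht.phiK_eq_pre_append_suc hl hi]
  exact List.suffix_append _ _

theorem not_isInfix_phiK_succ_canonIdx (ht : IsCanonical D t) (hl : 1 < t.length) (s : List α) :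
    ¬ [pre D t, suc D t] <:+: phiK D (canonIdx D t + 1) s := by
  rw [phiK_succ_of_getElem? (ht.getElem?_canonIdx hl)]
  exact not_isInfix_applyRule (r := (pre D t, suc D t)) (ht.isCanonical_pre hl).ne_nil
    ht.isCanonical_suc.ne_nil _

end IsCanonical

namespace InPath

variable {D : Dict α} {x a b t u : Token α} {i : ℕ}

theorem trans (hxa : InPath D x a) (hab : InPath D a b) : InPath D x b := by
  obtain ⟨m, rfl⟩ := hxa
  obtain ⟨n, rfl⟩ := hab
  exact ⟨n + m, Function.iterate_add_apply _ n m x⟩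

theorem total (hxa : InPath D x a) (hxb : InPath D x b) : InPath D a b ∨ InPath D b a := by
  obtain ⟨m, rfl⟩ := hxa
  obtain ⟨n, rfl⟩ := hxb
  refine (le_total m n).imp (fun h => ⟨n - m, ?_⟩) (fun h => ⟨m - n, ?_⟩) <;>
    rw [← Function.iterate_add_apply, Nat.sub_add_cancel h]

theorem isSuffix (h : InPath D x a) : a <:+ x := by
  obtain ⟨n, rfl⟩ := h
  induction n with
  | zero => exact List.suffix_refl x
  | succ n ih =>
    rw [Function.iterate_succ_apply']
    exact (suc_isSuffix D _).trans ih

theorem antisymm (hab : InPath D a b) (hba : InPath D b a) : a = b :=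
  hba.isSuffix.eq_of_length_le hab.isSuffix.length_le

theorem isCanonical (h : InPath D x a) (hx : IsCanonical D x) : IsCanonical D a := by
  obtain ⟨n, rfl⟩ := h
  induction n with
  | zero => exact hx
  | succ n ih =>
    rw [Function.iterate_succ_apply']
    exact ih.isCanonical_suc

theorem exists_child (h : InPath D a b) (ha : IsCanonical D a) (hne : a ≠ b) :
    ∃ u, InPath D a u ∧ 1 < u.length ∧ suc D u = b := by
  obtain ⟨n, rfl⟩ := h
  induction n with
  | zero => exact absurd rfl hne
  | succ n ih =>
    simp only [Function.iterate_succ_apply'] at hne ⊢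
    set v := (suc D)^[n] a with hv
    have hav : InPath D a v := ⟨n, hv.symm⟩
    rcases Nat.lt_or_ge 1 v.length with hl | hl
    · exact ⟨v, hav, hl, rfl⟩
    · have hsuc : suc D v = v := suc_eq_self (le_antisymm hl (hav.isCanonical ha).length_pos)
      rw [hsuc] at hne ⊢
      exact ih hne

theorem canonIdx_le (h : InPath D t u) (ht : IsCanonical D t) (hu : 1 < u.length) :
    canonIdx D u ≤ canonIdx D t := by
  obtain ⟨n, rfl⟩ := h
  induction n with
  | zero => exact le_rfl
  | succ n ih =>
    rw [Function.iterate_succ_apply'] at hu ⊢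
    have hv : IsCanonical D ((suc D)^[n] t) := isCanonical ⟨n, rfl⟩ ht
    have hvl := hu.trans_le (suc_isSuffix D _).length_le
    have hlt := hv.isCanonical_suc.canonIdx_lt_of_phiK_eq_singleton hu
      (hv.phiK_canonIdx_pre_suc hvl).2
    exact hlt.le.trans (ih hvl)

theorem phiK_isSuffix (h : InPath D t u) (ht : IsCanonical D t) (hu : 1 < u.length)
    (hi : i ≤ canonIdx D u) : phiK D i u <:+ phiK D i t := by
  obtain ⟨n, rfl⟩ := h
  induction n with
  | zero => exact List.suffix_refl _
  | succ n ih =>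
    rw [Function.iterate_succ_apply'] at hu hi ⊢
    have hv : IsCanonical D ((suc D)^[n] t) := isCanonical ⟨n, rfl⟩ ht
    have hvl := hu.trans_le (suc_isSuffix D _).length_le
    have hiv := hi.trans (canonIdx_le ⟨1, rfl⟩ hv hu)
    exact (hv.phiK_suc_isSuffix hvl hiv).trans (ih hvl hiv)

end InPath

theorem canonIdx_le_of_inPath_pre {D : Dict α} {wa wb u : Token α}
    (ha : IsCanonical D wa) (hal : 1 < wa.length) (hb : IsCanonical D wb) (hbl : 1 < wb.length)
    (hsuc : suc D wa = suc D wb) (hpath : InPath D (pre D wa) u) (hul : 1 < u.length)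
    (hu : suc D u = pre D wb) : canonIdx D u ≤ canonIdx D wb := by
  have hpa := ha.isCanonical_pre hal
  have hpal := hul.trans_le hpath.isSuffix.length_le
  have hua : canonIdx D u < canonIdx D wa :=
    (hpath.canonIdx_le hpa hul).trans_lt
      (hpa.canonIdx_lt_of_phiK_eq_singleton hpal (ha.phiK_canonIdx_pre_suc hal).1)
  obtain ⟨hpre_wb, hsuc_wb⟩ := hb.phiK_canonIdx_pre_suc hbl
  by_contra! hlt
  have hpre : [pre D wb] <:+ phiK D (canonIdx D wb + 1) (pre D wa) := by
    rw [← phiK_eq_singleton_of_le (Nat.le_succ _) hpre_wb, ← hu]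
    exact ((hpath.isCanonical hpa).phiK_suc_isSuffix hul hlt).trans
      (hpath.phiK_isSuffix hpa hul hlt)
  have hpair : [pre D wb, suc D wb] <:+ phiK D (canonIdx D wb + 1) wa := by
    rw [ha.phiK_eq_pre_append_suc hal (Nat.succ_le_of_lt (hlt.trans hua)), hsuc,
      phiK_eq_singleton_of_le (Nat.le_succ _) hsuc_wb]
    obtain ⟨φ, hφ⟩ := hpre
    exact ⟨φ, by simp [← hφ]⟩
  exact hb.not_isInfix_phiK_succ_canonIdx hbl wa hpair.isInfix

/-- The non-atomic clause of the Prefix Last-Token Condition `PLTC` of `t`, with an arbitrary token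
`x` in place of the last token of the string that remains when `suc D t` is removed. -/
def PLTCFrom (D : Dict α) (x t : Token α) : Prop :=
  InPath D x (pre D t) ∧
    (x ≠ pre D t → ∀ u : Token α, 1 < u.length → IsCanonical D u → suc D u = pre D t →
      InPath D x u → canonIdx D t < canonIdx D u)

theorem PLTC.pltcFrom {D : Dict α} {s t : Token α} (h : PLTC D s t) (hl : 1 < t.length) :
    PLTCFrom D (theta D (dropSuffix s (suc D t))) t :=
  (h.resolve_left hl.ne').2

theorem PLTCFrom.pre_eq_of_inPath {D : Dict α} {x wa wb : Token α} (hxb : PLTCFrom D x wb)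
    (ha : IsCanonical D wa) (hal : 1 < wa.length) (hb : IsCanonical D wb) (hbl : 1 < wb.length)
    (hsuc : suc D wa = suc D wb) (hxa : InPath D x (pre D wa))
    (hab : InPath D (pre D wa) (pre D wb)) : pre D wa = pre D wb := by
  by_contra hne
  obtain ⟨u, hpath, hul, hu⟩ := hab.exists_child (ha.isCanonical_pre hal) hne
  have hx : x ≠ pre D wb := by
    rintro rfl
    exact hne (hab.antisymm hxa)
  have hdom := hxb.2 hx u hul (hpath.isCanonical (ha.isCanonical_pre hal)) hu (hxa.trans hpath)
  exact hdom.not_ge (canonIdx_le_of_inPath_pre ha hal hb hbl hsuc hpath hul hu)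

theorem satisfying_child_unique_general {D : Dict α} {x wa wb : Token α}
    (ha : IsCanonical D wa) (hal : 1 < wa.length) (hb : IsCanonical D wb) (hbl : 1 < wb.length)
    (hsuc : suc D wa = suc D wb) (hxa : PLTCFrom D x wa) (hxb : PLTCFrom D x wb) : wa = wb := by
  have hpre : pre D wa = pre D wb := by
    rcases hxa.1.total hxb.1 with hab | hba
    · exact hxb.pre_eq_of_inPath ha hal hb hbl hsuc hxa.1 hab
    · exact (hxa.pre_eq_of_inPath hb hbl ha hal hsuc.symm hxb.1 hba).symm
  rw [← ha.pre_append_suc hal, hpre, hsuc, hb.pre_append_suc hbl]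

/-- **Uniqueness of the satisfying child.** Two distinct non-atomic canonical suffix
tokens of `s` with the same successor cannot both satisfy the Prefix Last-Token
Condition with respect to `s`. -/
theorem satisfying_child_unique [Fintype α] (D : Dict α) (hD : ValidDict D)
    (s : List α) (hs : s ≠ [])
    (wa wb : Token α) (hne : wa ≠ wb)
    (ha : IsCanonical D wa) (hal : 1 < wa.length) (has : wa <:+ s)
    (hb : IsCanonical D wb) (hbl : 1 < wb.length) (hbs : wb <:+ s)
    (hsuc : suc D wa = suc D wb) :
    ¬ (PLTC D s wa ∧ PLTC D s wb) := by
  rintro ⟨hwa, hwb⟩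
  exact hne (satisfying_child_unique_general ha hal hb hbl hsuc (hwa.pltcFrom hal)
    (hsuc ▸ hwb.pltcFrom hbl))

end BPE
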